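/- Let a0 ∈ ℝ^k with ‖a0‖₂ = 1 and λ > 0. Let σ ∈ {−1, 0, 1}^m with support I = supp(σ), and let a ∈ ℝ^k with ‖a‖₂ = 1 satisfy sign(S_λ((Č_{a0})* ι a)) = σ (entrywise). Then φ̂(a) = −½ aᵀ ι* Č_{a0} P_I (Č_{a0})* ι a + λ σᵀ P_I (Č_{a0})* ι a + ½ − λ²|I|/2, where P_I is the m×m diagonal 0/1 projection matrix onto the coordinates in I. -/

import Mathlib

open scoped BigOperators Matrix

attribute [local instance 10] Classical.propDecidable

noncomputable section

/-- The index `t mod m` as an element of `Fin m`. -/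
def idx (m : ℕ) [NeZero m] (t : ℤ) : Fin m :=
  ⟨(t % (m : ℤ)).toNat, by
    have hm : 0 < m := Nat.pos_of_ne_zero (NeZero.ne m)
    have hm' : (0 : ℤ) < (m : ℤ) := by exact_mod_cast hm
    have h1 : 0 ≤ t % (m : ℤ) := Int.emod_nonneg t (ne_of_gt hm')
    have h2 : t % (m : ℤ) < (m : ℤ) := Int.emod_lt_of_pos t hm'
    omega⟩

/-- Cyclic shift: `(cshift τ v) i = v ((i - τ) mod m)`. -/
def cshift {m : ℕ} [NeZero m] (τ : ℤ) (v : Fin m → ℝ) : Fin m → ℝ :=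
  fun i => v (idx m ((i : ℤ) - τ))

/-- Zero padding `ι : ℝ^k → ℝ^m`. -/
def pad (k m : ℕ) (a : Fin k → ℝ) : Fin m → ℝ :=
  fun i => if h : (i : ℕ) < k then a ⟨i, h⟩ else 0

/-- Restriction to the first `k` coordinates, `ι* : ℝ^m → ℝ^k`. -/
def unpad {k m : ℕ} (h : k ≤ m) (v : Fin m → ℝ) : Fin k → ℝ :=
  fun j => v (Fin.castLE h j)

/-- Circulant matrix `C_w` whose `j`-th column is `s_j[w]`. -/
def circ {m : ℕ} [NeZero m] (w : Fin m → ℝ) : Matrix (Fin m) (Fin m) ℝ :=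
  Matrix.of fun i j => cshift (j : ℤ) w i

/-- Reversed circulant matrix `Č_{a0}` whose `j`-th column is `s_{-j}[ι a0]`. -/
def rcirc (k m : ℕ) [NeZero m] (a0 : Fin k → ℝ) : Matrix (Fin m) (Fin m) ℝ :=
  Matrix.of fun i j => cshift (-(j : ℤ)) (pad k m a0) i

/-- Circular convolution `w ⊛ x = C_w x`. -/
def conv {m : ℕ} [NeZero m] (w x : Fin m → ℝ) : Fin m → ℝ := (circ w).mulVec x

def dotp {α : Type*} [Fintype α] (u v : α → ℝ) : ℝ := ∑ i, u i * v i

def l2sq {α : Type*} [Fintype α] (v : α → ℝ) : ℝ := ∑ i, v i ^ 2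

def l2norm {α : Type*} [Fintype α] (v : α → ℝ) : ℝ := Real.sqrt (l2sq v)

def l1norm {α : Type*} [Fintype α] (v : α → ℝ) : ℝ := ∑ i, |v i|

/-- Scalar soft-thresholding. -/
def soft (lam t : ℝ) : ℝ := Real.sign t * max (|t| - lam) 0

/-- Entrywise soft-thresholding `S_λ`. -/
def softvec {m : ℕ} (lam : ℝ) (u : Fin m → ℝ) : Fin m → ℝ := fun i => soft lam (u i)

/-- The shift truncation `ι* s_{-τ}[ι a0] ∈ ℝ^k`. -/
def shiftTrunc {k m : ℕ} [NeZero m] (h : k ≤ m) (a0 : Fin k → ℝ) (τ : Fin m) : Fin k → ℝ :=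
  unpad h (cshift (-(τ : ℤ)) (pad k m a0))

/-- The inner objective of the simplified marginal problem. -/
def phiHatInner (k m : ℕ) [NeZero m] (lam : ℝ) (a0 a : Fin k → ℝ) (x : Fin m → ℝ) : ℝ :=
  l2sq (pad k m a0) / 2 + l2sq x / 2 - dotp (conv (pad k m a) x) (pad k m a0) + lam * l1norm x

/-- The simplified marginal objective `φ̂`. -/
def phiHat (k m : ℕ) [NeZero m] (lam : ℝ) (a0 a : Fin k → ℝ) : ℝ :=
  sInf (Set.range (phiHatInner k m lam a0 a))

/-- Zero-padding `ι` as an `m × k` matrix. -/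
def padM (k m : ℕ) : Matrix (Fin m) (Fin k) ℝ :=
  Matrix.of fun i j => if (i : ℕ) = (j : ℕ) then 1 else 0

/-- The diagonal 0/1 projection matrix `P_I`. -/
def projM {m : ℕ} (I : Set (Fin m)) : Matrix (Fin m) (Fin m) ℝ :=
  Matrix.of fun i j => if i = j ∧ i ∈ I then 1 else 0

/-- The `ℓ² → ℓ²` operator norm of a matrix. -/
def opNorm {α β : Type*} [Fintype α] [Fintype β] (A : Matrix α β ℝ) : ℝ :=
  sSup {c | ∃ v : β → ℝ, l2norm v = 1 ∧ c = l2norm (A.mulVec v)}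

/-- The `ℓ² → ℓ∞` operator norm of a matrix. -/
def l2linfNorm {α β : Type*} [Fintype α] [Fintype β] (A : Matrix α β ℝ) : ℝ :=
  sSup {c | ∃ v : β → ℝ, l2norm v = 1 ∧ c = sSup {d | ∃ i, d = |A.mulVec v i|}}

/-- The smallest eigenvalue of a symmetric matrix, via the Rayleigh quotient. -/
def lamMin {n : ℕ} (A : Matrix (Fin n) (Fin n) ℝ) : ℝ :=
  sInf {c | ∃ v : Fin n → ℝ, l2sq v = 1 ∧ c = dotp v (A.mulVec v)}

/-- `‖v‖_p^p = ∑ |v i|^p` for a real exponent `p`. -/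
def lpPow {α : Type*} [Fintype α] (p : ℝ) (v : α → ℝ) : ℝ := ∑ i, |v i| ^ p

/-- The `ℓ^p` norm with real exponent `p`. -/
def lpNorm {α : Type*} [Fintype α] (p : ℝ) (v : α → ℝ) : ℝ := (lpPow p v) ^ (1 / p)

/-- The continuous linear functional `v ↦ ⟨g, v⟩` on `ℝ^n`. -/
def dotCLM {n : ℕ} (g : Fin n → ℝ) : (Fin n → ℝ) →L[ℝ] ℝ :=
  LinearMap.toContinuousLinearMap
    { toFun := fun v => dotp g v
      map_add' := fun x y => by
        simp [dotp, mul_add, Finset.sum_add_distrib]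
      map_smul' := fun c x => by
        simp only [dotp, Pi.smul_apply, smul_eq_mul, RingHom.id_apply, Finset.mul_sum]
        exact Finset.sum_congr rfl fun i _ => by ring }

theorem idx_sub_add {m : ℕ} [NeZero m] (i j : Fin m) :
    idx m (((idx m ((i : ℤ) + (j : ℤ)) : Fin m) : ℤ) - (j : ℤ)) = i := by
  have hm : 0 < m := Nat.pos_of_ne_zero (NeZero.ne m)
  have hm' : (m : ℤ) ≠ 0 := by exact_mod_cast hm.ne'
  apply Fin.ext
  have h1 : 0 ≤ ((i : ℤ) + (j : ℤ)) % (m : ℤ) := Int.emod_nonneg _ hm'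
  simp only [idx]
  rw [Int.toNat_of_nonneg h1, Int.emod_sub_emod, add_sub_cancel_right,
    Int.emod_eq_of_lt (by omega) (by have := i.2; omega)]
  simp

theorem idx_add_sub {m : ℕ} [NeZero m] (i j : Fin m) :
    idx m (((idx m ((i : ℤ) - (j : ℤ)) : Fin m) : ℤ) + (j : ℤ)) = i := by
  have hm : 0 < m := Nat.pos_of_ne_zero (NeZero.ne m)
  have hm' : (m : ℤ) ≠ 0 := by exact_mod_cast hm.ne'
  apply Fin.ext
  have h1 : 0 ≤ ((i : ℤ) - (j : ℤ)) % (m : ℤ) := Int.emod_nonneg _ hm'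
  simp only [idx]
  rw [Int.toNat_of_nonneg h1, Int.emod_add_emod, sub_add_cancel,
    Int.emod_eq_of_lt (by omega) (by have := i.2; omega)]
  simp

def shiftEquiv {m : ℕ} [NeZero m] (j : Fin m) : Fin m ≃ Fin m where
  toFun i := idx m ((i : ℤ) + (j : ℤ))
  invFun i := idx m ((i : ℤ) - (j : ℤ))
  left_inv i := idx_sub_add i j
  right_inv i := idx_add_sub i j

theorem conv_dotp {k m : ℕ} [NeZero m] (a0 a : Fin k → ℝ) (x : Fin m → ℝ) :
    dotp (conv (pad k m a) x) (pad k m a0) =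
      ∑ j, ((rcirc k m a0)ᵀ).mulVec (pad k m a) j * x j := by
  simp only [dotp, conv, circ, rcirc, Matrix.mulVec, dotProduct, Matrix.of_apply,
    Matrix.transpose_apply, cshift, Finset.sum_mul]
  rw [Finset.sum_comm]
  refine Finset.sum_congr rfl fun j _ => ?_
  rw [← Equiv.sum_comp (shiftEquiv j)]
  refine Finset.sum_congr rfl fun i _ => ?_
  simp only [shiftEquiv, Equiv.coe_fn_mk, idx_sub_add, sub_neg_eq_add]
  ring

theorem padM_mulVec {k m : ℕ} (a : Fin k → ℝ) : (padM k m).mulVec a = pad k m a := by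
  funext i
  simp only [padM, pad, Matrix.mulVec, dotProduct, Matrix.of_apply, ite_mul, one_mul, zero_mul]
  split_ifs with h
  · rw [Finset.sum_eq_single (⟨i, h⟩ : Fin k)]
    · simp
    · intro b _ hb
      rw [if_neg]
      intro hh
      exact hb (Fin.ext hh.symm)
    · simp
  · refine Finset.sum_eq_zero fun b _ => ?_
    rw [if_neg]
    intro hh
    have := b.2
    omega

theorem projM_mulVec {m : ℕ} (I : Set (Fin m)) (u : Fin m → ℝ) (i : Fin m) :
    (projM I).mulVec u i = if i ∈ I then u i else 0 := by
  simp only [projM, Matrix.mulVec, dotProduct, Matrix.of_apply]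
  rw [Finset.sum_eq_single i]
  · simp
  · intro b _ hb
    simp [Ne.symm hb]
  · simp

theorem l2sq_pad {k m : ℕ} (hkm : k ≤ m) (a : Fin k → ℝ) : l2sq (pad k m a) = l2sq a := by
  obtain ⟨n, rfl⟩ := Nat.exists_eq_add_of_le hkm
  simp [l2sq, pad, Fin.sum_univ_add]

theorem scalar_fact (lam u s : ℝ) (hlam : 0 < lam) (hs : Real.sign (soft lam u) = s) :
    (∀ x : ℝ, (if s ≠ 0 then -(u ^ 2) / 2 + lam * s * u - lam ^ 2 / 2 else 0)
      ≤ x ^ 2 / 2 - u * x + lam * |x|) ∧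
    (soft lam u) ^ 2 / 2 - u * soft lam u + lam * |soft lam u| =
      (if s ≠ 0 then -(u ^ 2) / 2 + lam * s * u - lam ^ 2 / 2 else 0) := by
  rcases lt_or_ge lam u with h | h
  · have e : soft lam u = u - lam := by
      rw [soft, Real.sign_of_pos (by linarith), abs_of_pos (by linarith), max_eq_left (by linarith)]
      ring
    rw [e, Real.sign_of_pos (by linarith)] at hs
    subst hs
    rw [e, abs_of_pos (by linarith)]
    simp only [ne_eq, one_ne_zero, not_false_eq_true, if_true]
    refine ⟨fun x => ?_, by ring⟩
    nlinarith [sq_nonneg (x - (u - lam)), le_abs_self x]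
  rcases lt_or_ge u (-lam) with h' | h'
  · have e : soft lam u = u + lam := by
      rw [soft, Real.sign_of_neg (by linarith), abs_of_neg (by linarith), max_eq_left (by linarith)]
      ring
    rw [e, Real.sign_of_neg (by linarith)] at hs
    subst hs
    rw [e, abs_of_neg (by linarith)]
    rw [if_pos (by norm_num)]
    refine ⟨fun x => ?_, by ring⟩
    nlinarith [sq_nonneg (x - (u + lam)), neg_abs_le x]
  · have hu : |u| ≤ lam := abs_le.2 ⟨h', h⟩
    have e : soft lam u = 0 := by
      rw [soft, max_eq_right (by linarith), mul_zero]
    rw [e, Real.sign_zero] at hs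
    subst hs
    rw [e]
    simp only [ne_eq, not_true_eq_false, if_false]
    refine ⟨fun x => ?_, by simp⟩
    have h1 : u * x ≤ |u| * |x| := by rw [← abs_mul]; exact le_abs_self _
    nlinarith [mul_le_mul_of_nonneg_right hu (abs_nonneg x), sq_nonneg x]

/-- on a region of constant sign-support pattern `σ`, the marginal
objective `φ̂` has the closed quadratic form
`φ̂(a) = −½ aᵀ ι* Č P_I Čᵀ ι a + λ σᵀ P_I Čᵀ ι a + ½ − λ²|I|/2`. -/
theorem stmt_4 {k m : ℕ} [NeZero m] (hkm : k ≤ m) (lam : ℝ) (hlam : 0 < lam)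
    (a0 a : Fin k → ℝ) (ha0 : l2norm a0 = 1) (ha : l2norm a = 1)
    (σ : Fin m → ℝ) (hσval : ∀ i, σ i = -1 ∨ σ i = 0 ∨ σ i = 1)
    (hsign : ∀ i, Real.sign (softvec lam (((rcirc k m a0)ᵀ).mulVec (pad k m a)) i) = σ i) :
    phiHat k m lam a0 a =
      -(1 / 2) * dotp a
          (((padM k m)ᵀ * rcirc k m a0 * projM {i | σ i ≠ 0} * (rcirc k m a0)ᵀ *
            padM k m).mulVec a)
        + lam * dotp σ ((projM {i | σ i ≠ 0} * (rcirc k m a0)ᵀ * padM k m).mulVec a)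
        + 1 / 2 - lam ^ 2 * ({i | σ i ≠ 0} : Set (Fin m)).ncard / 2 := by
  set u := ((rcirc k m a0)ᵀ).mulVec (pad k m a) with hu
  have hl : l2sq (pad k m a0) = 1 := by
    rw [l2sq_pad hkm]
    have := ha0
    rwa [l2norm, Real.sqrt_eq_one] at this
  have hinner : ∀ x, phiHatInner k m lam a0 a x =
      1 / 2 + ∑ i, (x i ^ 2 / 2 - u i * x i + lam * |x i|) := by
    intro x
    rw [phiHatInner, hl, conv_dotp, ← hu, l2sq, l1norm, Finset.sum_add_distrib,
      Finset.sum_sub_distrib, Finset.mul_sum, Finset.sum_div]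
    ring
  have hq : dotp a (((padM k m)ᵀ * rcirc k m a0 * projM {i | σ i ≠ 0} * (rcirc k m a0)ᵀ *
            padM k m).mulVec a) = ∑ i, if σ i ≠ 0 then u i ^ 2 else 0 := by
    change a ⬝ᵥ _ = _
    rw [← Matrix.mulVec_mulVec, padM_mulVec, ← Matrix.mulVec_mulVec, ← hu,
      ← Matrix.mulVec_mulVec, ← Matrix.mulVec_mulVec, Matrix.dotProduct_mulVec,
      Matrix.vecMul_transpose, padM_mulVec, Matrix.dotProduct_mulVec, ← Matrix.mulVec_transpose,
      ← hu, dotProduct]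
    refine Finset.sum_congr rfl fun i _ => ?_
    rw [projM_mulVec]
    simp only [Set.mem_setOf_eq]
    split_ifs <;> ring
  have hd : dotp σ ((projM {i | σ i ≠ 0} * (rcirc k m a0)ᵀ * padM k m).mulVec a)
      = ∑ i, if σ i ≠ 0 then σ i * u i else 0 := by
    rw [← Matrix.mulVec_mulVec, padM_mulVec, ← Matrix.mulVec_mulVec, ← hu, dotp]
    refine Finset.sum_congr rfl fun i _ => ?_
    rw [projM_mulVec]
    simp only [Set.mem_setOf_eq]
    split_ifs <;> ring
  have hc : ((({i | σ i ≠ 0} : Set (Fin m)).ncard : ℕ) : ℝ) = ∑ i, if σ i ≠ 0 then (1 : ℝ) else 0 := by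
    rw [Finset.sum_boole, Set.ncard_eq_toFinset_card']
    congr 2
    ext i
    simp
  have hR : -(1 / 2) * (∑ i, if σ i ≠ 0 then u i ^ 2 else 0)
      + lam * (∑ i, if σ i ≠ 0 then σ i * u i else 0) + 1 / 2
      - lam ^ 2 * (∑ i, if σ i ≠ 0 then (1 : ℝ) else 0) / 2 = 1 / 2 +
      ∑ i, (if σ i ≠ 0 then -(u i ^ 2) / 2 + lam * σ i * u i - lam ^ 2 / 2 else 0) := by
    have : ∀ i, (if σ i ≠ 0 then -(u i ^ 2) / 2 + lam * σ i * u i - lam ^ 2 / 2 else 0) =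
        -(1 / 2) * (if σ i ≠ 0 then u i ^ 2 else 0) + lam * (if σ i ≠ 0 then σ i * u i else 0)
        - lam ^ 2 / 2 * (if σ i ≠ 0 then (1 : ℝ) else 0) := by
      intro i
      split_ifs <;> ring
    simp only [this]
    rw [Finset.sum_sub_distrib, Finset.sum_add_distrib, ← Finset.mul_sum, ← Finset.mul_sum,
      ← Finset.mul_sum]
    ring
  rw [hq, hd, hc, hR, phiHat]
  apply IsLeast.csInf_eq
  constructor
  · refine ⟨softvec lam u, ?_⟩
    rw [hinner]
    congr 1
    exact Finset.sum_congr rfl fun i _ => (scalar_fact lam (u i) (σ i) hlam (hsign i)).2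
  · rintro _ ⟨x, rfl⟩
    rw [hinner]
    have := Finset.sum_le_sum fun i (_ : i ∈ Finset.univ) =>
      (scalar_fact lam (u i) (σ i) hlam (hsign i)).1 (x i)
    linarith

end
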